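/- arXiv:1709.10006 — 2 statements merged into one kernel-verified Lean document; each statement's English description precedes it below -/
import Mathlib

section
/- (Discrete Cheeger inequality, Dodziuk / Alon–Milman.) Let G be a D-regular simple graph on N ≥ 2 vertices with D ≥ 1, and let λ₁ ≥ λ₂ ≥ … ≥ λ_N be the eigenvalues of its adjacency matrix. Then λ₂ ≤ D − h(G)²/(2D), where h(G) = min over all nonempty vertex subsets U with |U| ≤ N/2 of e(U, Uᶜ)/|U|, and e(U, Uᶜ) is the number of edges of G with one endpoint in U and the other in its complement. -/
open scoped Matrix

/-- The Euclidean (ℓ²) norm of a finitely-supported real vector. -/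
noncomputable def l2norm {α : Type*} [Fintype α] (v : α → ℝ) : ℝ :=
  Real.sqrt (∑ x, v x ^ 2)

open Classical in
/-- The (real) adjacency matrix of a graph. -/
noncomputable def adjMat {α : Type*} [Fintype α] (G : SimpleGraph α) : Matrix α α ℝ :=
  fun x y => if G.Adj x y then 1 else 0

/-- For a regular graph, `λ(G) ≤ lam` (all eigenvalues other than the largest are
at most `lam` in absolute value) is equivalent to the adjacency operator contracting
by a factor `lam` on the space of mean-zero vectors. -/
def eigBound {α : Type*} [Fintype α] (G : SimpleGraph α) (lam : ℝ) : Prop :=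
  ∀ v : α → ℝ, (∑ x, v x) = 0 → l2norm (adjMat G *ᵥ v) ≤ lam * l2norm v

lemma adjMat_isHermitian {α : Type*} [Fintype α] (G : SimpleGraph α) :
    (adjMat G).IsHermitian := by
  unfold Matrix.IsHermitian
  ext x y
  by_cases h : G.Adj x y
  · simp [adjMat, Matrix.conjTranspose_apply, h, h.symm]
  · have h' : ¬ G.Adj y x := fun hyx => h hyx.symm
    simp [adjMat, Matrix.conjTranspose_apply, h, h']

open Classical in
/-- The number of edges of `G` with one endpoint in `U` and the other in `Uᶜ`. -/
noncomputable def cutCount {α : Type*} [Fintype α] [DecidableEq α]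
    (G : SimpleGraph α) (U : Finset α) : ℕ :=
  ∑ x ∈ U, ∑ y ∈ Uᶜ, if G.Adj x y then 1 else 0

/- Write `E(f) = ½ ∑ A x y (f x - f y)²` for the Dirichlet energy. If `f ≥ 0` lives on at most half
of the vertices, then every level set of `f²` is subject to the expansion bound, and integrating
over the levels (coarea) gives `h ∑ f² ≤ ½ ∑ A x y |f x² - f y²|`. Factoring `f x² - f y²` and
applying Cauchy–Schwarz turns this into `h² ∑ f² ≤ 2 D E(f)`. A mean-zero `g` is cut at a median `c`
into `(g - c)⁺` and `(g - c)⁻`, both of which live on at most half of the vertices, while their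
energies add up to at most `E(g)`. Since `E(g) ≤ D ∑ g² - ⟨g, A g⟩`, and since the span of the first
two eigenvectors contains a mean-zero vector with Rayleigh quotient at least `λ₂`, the bound
follows. -/

open MeasureTheory Finset

section Order

lemma exists_median {α β : Type*} [Fintype α] [Nonempty α] [LinearOrder β] (g : α → β) :
    ∃ c : β, 2 * #{x | c < g x} ≤ Fintype.card α ∧ 2 * #{x | g x < c} ≤ Fintype.card α := by
  let e := (Fintype.equivFin α).symm
  let σ := (Tuple.sort (g ∘ e)).trans e
  have hσ : Monotone (g ∘ σ) := Tuple.monotone_sort (g ∘ e)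
  let m : Fin (Fintype.card α) := ⟨Fintype.card α / 2, Nat.div_lt_self Fintype.card_pos one_lt_two⟩
  have card_filter_eq (p : α → Prop) [DecidablePred p] : #{x | p x} = #{i | p (σ i)} :=
    (Finset.card_equiv σ (by simp)).symm
  refine ⟨g (σ m), ?_, ?_⟩
  · have : #{i | g (σ m) < g (σ i)} ≤ #(Ioi m) :=
      card_le_card fun i hi ↦ mem_Ioi.2 (hσ.reflect_lt (by simpa using hi))
    rw [card_filter_eq]
    rw [Fin.card_Ioi, show m.val = Fintype.card α / 2 from rfl] at this
    omega
  · have : #{i | g (σ i) < g (σ m)} ≤ #(Iio m) :=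
      card_le_card fun i hi ↦ mem_Iio.2 (hσ.reflect_lt (by simpa using hi))
    rw [card_filter_eq]
    rw [Fin.card_Iio, show m.val = Fintype.card α / 2 from rfl] at this
    omega

variable {R : Type*} [CommRing R] [LinearOrder R] [IsStrictOrderedRing R]

lemma posPart_mul_negPart_eq_zero (a : R) : a⁺ * a⁻ = 0 := by
  rcases le_total a 0 with ha | ha
  · rw [posPart_of_nonpos ha, zero_mul]
  · rw [negPart_of_nonneg ha, mul_zero]

lemma posPart_sq_add_negPart_sq (a : R) : a⁺ ^ 2 + a⁻ ^ 2 = a ^ 2 := by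
  conv_rhs => rw [← posPart_sub_negPart a]
  linear_combination 2 * posPart_mul_negPart_eq_zero a

lemma sq_posPart_sub_add_sq_negPart_sub_le (a b : R) :
    (a⁺ - b⁺) ^ 2 + (a⁻ - b⁻) ^ 2 ≤ (a - b) ^ 2 := by
  have hcross : 0 ≤ a⁺ * b⁻ + b⁺ * a⁻ := by positivity
  calc (a⁺ - b⁺) ^ 2 + (a⁻ - b⁻) ^ 2
      ≤ (a⁺ - b⁺) ^ 2 + (a⁻ - b⁻) ^ 2 + 2 * (a⁺ * b⁻ + b⁺ * a⁻) := by linarith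
    _ = ((a⁺ - a⁻) - (b⁺ - b⁻)) ^ 2 := by
      linear_combination 2 * posPart_mul_negPart_eq_zero a + 2 * posPart_mul_negPart_eq_zero b
    _ = (a - b) ^ 2 := by rw [posPart_sub_negPart, posPart_sub_negPart]

end Order

lemma exists_ker_eigenvalue_mul_le_dotProduct_mulVec {n R : Type*} [Fintype n] [CommRing R]
    [LinearOrder R] [IsStrictOrderedRing R] {A : Matrix n n R} {u v : n → R} {a b : R}
    (hu : A *ᵥ u = a • u) (hv : A *ᵥ v = b • v) (hu0 : u ≠ 0) (hv0 : v ≠ 0) (huv : u ⬝ᵥ v = 0)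
    (hba : b ≤ a) (φ : (n → R) →ₗ[R] R) :
    ∃ w ≠ 0, φ w = 0 ∧ b * (w ⬝ᵥ w) ≤ w ⬝ᵥ A *ᵥ w := by
  have hrayleigh (s t : R) :
      b * ((s • u + t • v) ⬝ᵥ (s • u + t • v)) ≤ (s • u + t • v) ⬝ᵥ A *ᵥ (s • u + t • v) := by
    have hvu : v ⬝ᵥ u = 0 := by rw [dotProduct_comm, huv]
    have huu : 0 ≤ u ⬝ᵥ u := sum_nonneg fun i _ ↦ mul_self_nonneg (u i)
    simp only [Matrix.mulVec_add, Matrix.mulVec_smul, hu, hv, add_dotProduct, dotProduct_add,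
      smul_dotProduct, dotProduct_smul, huv, hvu, smul_eq_mul]
    linarith [mul_nonneg (sub_nonneg.2 hba) (mul_nonneg (mul_self_nonneg s) huu)]
  by_cases hφu : φ u = 0
  · exact ⟨u, hu0, hφu, by simpa using hrayleigh 1 0⟩
  · refine ⟨φ v • u + (-φ u) • v, fun hw ↦ ?_, by simp [mul_comm], hrayleigh _ _⟩
    have hwv : φ u * (v ⬝ᵥ v) = 0 := by
      simpa [huv] using congrArg (· ⬝ᵥ v) hw
    exact (mul_ne_zero hφu (dotProduct_self_eq_zero.not.2 hv0)) hwv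

section DirichletEnergy

variable {α : Type*} [Fintype α] {A : Matrix α α ℝ} {D : ℝ}

/-- The Dirichlet form of the weighted graph with edge weights `A`. The double sum runs over ordered
pairs, so the factor `1 / 2` makes every edge count once. -/
noncomputable def dirichletEnergy (A : Matrix α α ℝ) (f : α → ℝ) : ℝ :=
  (∑ x, ∑ y, A x y * (f x - f y) ^ 2) / 2

lemma dirichletEnergy_sub_const (A : Matrix α α ℝ) (f : α → ℝ) (c : ℝ) :
    dirichletEnergy A (fun x ↦ f x - c) = dirichletEnergy A f := by
  simp only [dirichletEnergy, sub_sub_sub_cancel_right]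

lemma dirichletEnergy_posPart_add_negPart_le (hA : ∀ x y, 0 ≤ A x y) (f : α → ℝ) :
    dirichletEnergy A (fun x ↦ (f x)⁺) + dirichletEnergy A (fun x ↦ (f x)⁻)
      ≤ dirichletEnergy A f := by
  simp only [dirichletEnergy, ← add_div, ← sum_add_distrib, ← mul_add]
  gcongr with x _ y _
  · exact hA x y
  · exact sq_posPart_sub_add_sq_negPart_sub_le (f x) (f y)

lemma sum_mul_add_le_of_row_sum_le (hsymm : A.IsSymm) (hrow : ∀ x, ∑ y, A x y ≤ D)
    {f : α → ℝ} (hf : ∀ x, 0 ≤ f x) :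
    ∑ x, ∑ y, A x y * (f x + f y) ≤ 2 * D * ∑ x, f x := by
  have hfst : ∑ x, ∑ y, A x y * f x ≤ D * ∑ x, f x := by
    simp only [← sum_mul, mul_sum]
    exact sum_le_sum fun x _ ↦ mul_le_mul_of_nonneg_right (hrow x) (hf x)
  have hsnd : ∑ x, ∑ y, A x y * f y = ∑ x, ∑ y, A x y * f x := by
    rw [sum_comm]
    simp only [hsymm.apply]
  simp only [mul_add, sum_add_distrib]
  linarith

lemma dirichletEnergy_le (hsymm : A.IsSymm) (hrow : ∀ x, ∑ y, A x y ≤ D) (f : α → ℝ) :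
    dirichletEnergy A f ≤ D * ∑ x, f x ^ 2 - f ⬝ᵥ A *ᵥ f := by
  have hsq := sum_mul_add_le_of_row_sum_le hsymm hrow fun x ↦ sq_nonneg (f x)
  have hexpand : ∑ x, ∑ y, A x y * (f x - f y) ^ 2
      = ∑ x, ∑ y, A x y * (f x ^ 2 + f y ^ 2) - 2 * (f ⬝ᵥ A *ᵥ f) := by
    simp only [dotProduct, Matrix.mulVec, mul_sum, ← sum_sub_distrib]
    exact sum_congr rfl fun x _ ↦ sum_congr rfl fun y _ ↦ by ring
  rw [dirichletEnergy, hexpand]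
  linarith

lemma sq_sum_mul_abs_sq_sub_sq_le (hA : ∀ x y, 0 ≤ A x y) (hsymm : A.IsSymm)
    (hrow : ∀ x, ∑ y, A x y ≤ D) (f : α → ℝ) :
    (∑ x, ∑ y, A x y * |f x ^ 2 - f y ^ 2|) ^ 2
      ≤ 8 * D * dirichletEnergy A f * ∑ x, f x ^ 2 := by
  have hcauchy : (∑ x, ∑ y, A x y * |f x ^ 2 - f y ^ 2|) ^ 2
      ≤ (∑ x, ∑ y, A x y * (f x - f y) ^ 2) * ∑ x, ∑ y, A x y * (f x + f y) ^ 2 := by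
    simp only [← Fintype.sum_prod_type']
    refine sum_sq_le_sum_mul_sum_of_sq_le_mul _ (fun p _ ↦ mul_nonneg (hA _ _) (sq_nonneg _))
      (fun p _ ↦ mul_nonneg (hA _ _) (sq_nonneg _)) fun p _ ↦ ?_
    rw [mul_pow, sq_abs]
    exact le_of_eq (by ring)
  have hplus : ∑ x, ∑ y, A x y * (f x + f y) ^ 2 ≤ 4 * D * ∑ x, f x ^ 2 :=
    calc ∑ x, ∑ y, A x y * (f x + f y) ^ 2
        ≤ ∑ x, ∑ y, A x y * (2 * (f x ^ 2 + f y ^ 2)) := by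
          gcongr with x _ y _
          · exact hA x y
          · exact add_sq_le
      _ = 2 * ∑ x, ∑ y, A x y * (f x ^ 2 + f y ^ 2) := by
          simp only [mul_sum, mul_left_comm]
      _ ≤ 4 * D * ∑ x, f x ^ 2 := by
          linarith [sum_mul_add_le_of_row_sum_le hsymm hrow fun x ↦ sq_nonneg (f x)]
  have hminus : 0 ≤ ∑ x, ∑ y, A x y * (f x - f y) ^ 2 :=
    sum_nonneg fun x _ ↦ sum_nonneg fun y _ ↦ mul_nonneg (hA x y) (sq_nonneg _)
  calc (∑ x, ∑ y, A x y * |f x ^ 2 - f y ^ 2|) ^ 2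
      ≤ (∑ x, ∑ y, A x y * (f x - f y) ^ 2) * (4 * D * ∑ x, f x ^ 2) :=
        hcauchy.trans (mul_le_mul_of_nonneg_left hplus hminus)
    _ = 8 * D * dirichletEnergy A f * ∑ x, f x ^ 2 := by
        rw [dirichletEnergy]
        ring

end DirichletEnergy

section Coarea

lemma integrable_indicator_Ico_one (a b : ℝ) : Integrable ((Set.Ico a b).indicator (1 : ℝ → ℝ)) :=
  (integrable_indicator_iff measurableSet_Ico).2 (integrableOn_const measure_Ico_lt_top.ne)

lemma integral_indicator_Ico_one (a b : ℝ) :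
    ∫ t, (Set.Ico a b).indicator (1 : ℝ → ℝ) t = (b - a)⁺ := by
  rw [integral_indicator_one measurableSet_Ico, Real.volume_real_Ico, posPart_def]

variable {α : Type*} [Fintype α]

/-- The level set `{x | t < f x}` when `0 ≤ t`, and the empty set when `t < 0`, so that integrals
over all levels `t : ℝ` converge. -/
noncomputable def levelFinset (f : α → ℝ) (t : ℝ) : Finset α := {x | t ∈ Set.Ico 0 (f x)}

lemma card_levelFinset (f : α → ℝ) (t : ℝ) :
    (#(levelFinset f t) : ℝ) = ∑ x, (Set.Ico 0 (f x)).indicator (1 : ℝ → ℝ) t := by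
  simp [levelFinset, Set.indicator_apply]

lemma integrable_card_levelFinset (f : α → ℝ) :
    Integrable fun t ↦ (#(levelFinset f t) : ℝ) := by
  simp only [card_levelFinset]
  exact integrable_finsetSum _ fun x _ ↦ integrable_indicator_Ico_one 0 (f x)

lemma integral_card_levelFinset {f : α → ℝ} (hf : ∀ x, 0 ≤ f x) :
    ∫ t, (#(levelFinset f t) : ℝ) = ∑ x, f x := by
  simp only [card_levelFinset]
  rw [integral_finsetSum _ fun x _ ↦ integrable_indicator_Ico_one 0 (f x)]
  simp only [integral_indicator_Ico_one, sub_zero, posPart_of_nonneg (hf _)]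

variable [DecidableEq α]

/-- The total weight of the edges of the weighted graph `A` leaving `U`, the analogue of
`e(U, Uᶜ)`. -/
def cutWeight (A : Matrix α α ℝ) (U : Finset α) : ℝ :=
  ∑ x ∈ U, ∑ y ∈ Uᶜ, A x y

lemma cutWeight_levelFinset (A : Matrix α α ℝ) {f : α → ℝ} (hf : ∀ x, 0 ≤ f x) (t : ℝ) :
    cutWeight A (levelFinset f t)
      = ∑ x, ∑ y, A x y * (Set.Ico (f y) (f x)).indicator (1 : ℝ → ℝ) t := by
  have hcross (x y : α) :
      t ∈ Set.Ico (f y) (f x) ↔ x ∈ levelFinset f t ∧ y ∈ (levelFinset f t)ᶜ := by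
    simp only [levelFinset, mem_compl, mem_filter_univ, Set.mem_Ico, not_and, not_lt]
    exact ⟨fun h ↦ ⟨⟨(hf y).trans h.1, h.2⟩, fun _ ↦ h.1⟩, fun h ↦ ⟨h.2 h.1.1, h.1.2⟩⟩
  simp only [cutWeight, Set.indicator_apply, hcross, Pi.one_apply, mul_ite, mul_one, mul_zero,
    ite_and, sum_ite_irrel, sum_const_zero, sum_ite_mem, univ_inter]

lemma integrable_cutWeight_levelFinset (A : Matrix α α ℝ) {f : α → ℝ} (hf : ∀ x, 0 ≤ f x) :
    Integrable fun t ↦ cutWeight A (levelFinset f t) := by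
  simp only [cutWeight_levelFinset A hf]
  exact integrable_finsetSum _ fun x _ ↦ integrable_finsetSum _ fun y _ ↦
    (integrable_indicator_Ico_one (f y) (f x)).const_mul (A x y)

lemma integral_cutWeight_levelFinset {A : Matrix α α ℝ} (hsymm : A.IsSymm) {f : α → ℝ}
    (hf : ∀ x, 0 ≤ f x) :
    ∫ t, cutWeight A (levelFinset f t) = (∑ x, ∑ y, A x y * |f x - f y|) / 2 := by
  have hint (x y : α) :
      Integrable fun t ↦ A x y * (Set.Ico (f y) (f x)).indicator (1 : ℝ → ℝ) t :=
    (integrable_indicator_Ico_one (f y) (f x)).const_mul (A x y)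
  have hposPart : ∫ t, cutWeight A (levelFinset f t) = ∑ x, ∑ y, A x y * (f x - f y)⁺ := by
    simp only [cutWeight_levelFinset A hf]
    rw [integral_finsetSum _ fun x _ ↦ integrable_finsetSum _ fun y _ ↦ hint x y]
    refine sum_congr rfl fun x _ ↦ ?_
    rw [integral_finsetSum _ fun y _ ↦ hint x y]
    simp only [integral_const_mul, integral_indicator_Ico_one]
  have hswap : ∑ x, ∑ y, A x y * (f x - f y)⁻ = ∑ x, ∑ y, A x y * (f x - f y)⁺ := by
    rw [sum_comm]
    simp only [hsymm.apply, ← posPart_neg, neg_sub]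
  simp only [← posPart_add_negPart, mul_add, sum_add_distrib]
  rw [hposPart, hswap, add_self_div_two]

end Coarea

section Expansion

variable {α : Type*} [Fintype α] [DecidableEq α] {A : Matrix α α ℝ} {h D : ℝ}

/-- The weighted graph `A` has edge expansion ratio at least `h`. The case `U = ∅` is allowed
because it is trivially true. -/
def HasExpansion (A : Matrix α α ℝ) (h : ℝ) : Prop :=
  ∀ U : Finset α, 2 * #U ≤ Fintype.card α → h * #U ≤ cutWeight A U

namespace HasExpansion

lemma mul_sum_le_sum_mul_abs_sub (hexp : HasExpansion A h) (hsymm : A.IsSymm)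
    {f : α → ℝ} (hf : ∀ x, 0 ≤ f x) (hsupp : 2 * #{x | 0 < f x} ≤ Fintype.card α) :
    h * ∑ x, f x ≤ (∑ x, ∑ y, A x y * |f x - f y|) / 2 := by
  have hlevel (t : ℝ) : levelFinset f t ⊆ ({x | 0 < f x} : Finset α) := fun x hx ↦ by
    have : t ∈ Set.Ico 0 (f x) := by simpa only [levelFinset, mem_filter_univ] using hx
    simpa only [mem_filter_univ] using this.1.trans_lt this.2
  rw [← integral_card_levelFinset hf, ← integral_cutWeight_levelFinset hsymm hf,
    ← integral_const_mul]
  exact integral_mono ((integrable_card_levelFinset f).const_mul h)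
    (integrable_cutWeight_levelFinset A hf) fun t ↦
      hexp _ ((Nat.mul_le_mul_left 2 (card_le_card (hlevel t))).trans hsupp)

lemma sq_mul_sum_sq_le_dirichletEnergy_of_card_pos_le (hexp : HasExpansion A h) (h0 : 0 ≤ h)
    (hA : ∀ x y, 0 ≤ A x y) (hsymm : A.IsSymm) (hrow : ∀ x, ∑ y, A x y ≤ D)
    {f : α → ℝ} (hf : ∀ x, 0 ≤ f x) (hsupp : 2 * #{x | 0 < f x} ≤ Fintype.card α) :
    h ^ 2 * ∑ x, f x ^ 2 ≤ 2 * D * dirichletEnergy A f := by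
  have hsupp' : 2 * #{x | 0 < f x ^ 2} ≤ Fintype.card α := by
    simpa only [sq_pos_iff, fun x ↦ (hf x).lt_iff_ne'] using hsupp
  have hcoarea : 2 * (h * ∑ x, f x ^ 2) ≤ ∑ x, ∑ y, A x y * |f x ^ 2 - f y ^ 2| := by
    linarith [hexp.mul_sum_le_sum_mul_abs_sub hsymm (fun x ↦ sq_nonneg (f x)) hsupp']
  have hnorm : 0 ≤ ∑ x, f x ^ 2 := sum_nonneg fun x _ ↦ sq_nonneg (f x)
  rcases hnorm.eq_or_lt with hzero | hpos
  · have : f = 0 := by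
      simpa [sum_eq_zero_iff_of_nonneg, sq_nonneg, funext_iff] using hzero.symm
    simp [this, dirichletEnergy]
  · have hsq : (2 * (h * ∑ x, f x ^ 2)) ^ 2 ≤ 8 * D * dirichletEnergy A f * ∑ x, f x ^ 2 :=
      (pow_le_pow_left₀ (by positivity) hcoarea 2).trans
        (sq_sum_mul_abs_sq_sub_sq_le hA hsymm hrow f)
    refine le_of_mul_le_mul_right ?_ hpos
    linarith

lemma sq_mul_sum_sq_le_dirichletEnergy_of_sum_eq_zero (hexp : HasExpansion A h) (h0 : 0 ≤ h)
    (hA : ∀ x y, 0 ≤ A x y) (hsymm : A.IsSymm) (hrow : ∀ x, ∑ y, A x y ≤ D)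
    {g : α → ℝ} (hg : ∑ x, g x = 0) :
    h ^ 2 * ∑ x, g x ^ 2 ≤ 2 * D * dirichletEnergy A g := by
  rcases isEmpty_or_nonempty α with _ | _
  · simp [dirichletEnergy]
  have hD : 0 ≤ D := (sum_nonneg fun y _ ↦ hA _ y).trans (hrow (Classical.arbitrary α))
  obtain ⟨c, hcpos, hcneg⟩ := exists_median g
  have hplus := hexp.sq_mul_sum_sq_le_dirichletEnergy_of_card_pos_le h0 hA hsymm hrow
    (f := fun x ↦ (g x - c)⁺) (fun x ↦ posPart_nonneg _) (by simpa using hcpos)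
  have hminus := hexp.sq_mul_sum_sq_le_dirichletEnergy_of_card_pos_le h0 hA hsymm hrow
    (f := fun x ↦ (g x - c)⁻) (fun x ↦ negPart_nonneg _) (by simpa using hcneg)
  have hshift : ∑ x, g x ^ 2 ≤ ∑ x, (g x - c) ^ 2 := by
    have : ∑ x, (g x - c) ^ 2 = ∑ x, g x ^ 2 + Fintype.card α * c ^ 2 := by
      simp only [sub_sq, sum_add_distrib, sum_sub_distrib, ← sum_mul, ← mul_sum, hg]
      simp
    rw [this]
    exact le_add_of_nonneg_right (by positivity)
  calc h ^ 2 * ∑ x, g x ^ 2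
      ≤ h ^ 2 * ∑ x, (g x - c) ^ 2 := by gcongr
    _ = h ^ 2 * ∑ x, (g x - c)⁺ ^ 2 + h ^ 2 * ∑ x, (g x - c)⁻ ^ 2 := by
        simp only [← mul_add, ← sum_add_distrib, posPart_sq_add_negPart_sq]
    _ ≤ 2 * D * (dirichletEnergy A (fun x ↦ (g x - c)⁺)
          + dirichletEnergy A (fun x ↦ (g x - c)⁻)) := by linarith
    _ ≤ 2 * D * dirichletEnergy A (fun x ↦ g x - c) := by
        gcongr
        exact dirichletEnergy_posPart_add_negPart_le hA _
    _ = 2 * D * dirichletEnergy A g := by rw [dirichletEnergy_sub_const]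

lemma dotProduct_mulVec_le (hexp : HasExpansion A h) (h0 : 0 ≤ h) (hD : 0 < D)
    (hA : ∀ x y, 0 ≤ A x y) (hsymm : A.IsSymm) (hrow : ∀ x, ∑ y, A x y ≤ D)
    {g : α → ℝ} (hg : ∑ x, g x = 0) :
    g ⬝ᵥ A *ᵥ g ≤ (D - h ^ 2 / (2 * D)) * ∑ x, g x ^ 2 := by
  have hgap : h ^ 2 / (2 * D) * ∑ x, g x ^ 2 ≤ dirichletEnergy A g := by
    rw [div_mul_eq_mul_div, div_le_iff₀' (by positivity)]
    exact hexp.sq_mul_sum_sq_le_dirichletEnergy_of_sum_eq_zero h0 hA hsymm hrow hg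
  linarith [dirichletEnergy_le hsymm hrow g]

end HasExpansion

/-- The condition on `i` and `j` is the ordering-free way of saying that the `j`-th eigenvalue is at
most `λ₂`. -/
theorem cheeger_inequality_general (hA : A.IsHermitian) (hnonneg : ∀ x y, 0 ≤ A x y)
    (hD : 0 < D) (hrow : ∀ x, ∑ y, A x y ≤ D) (h0 : 0 ≤ h) (hexp : HasExpansion A h)
    {i j : α} (hij : i ≠ j) (hle : hA.eigenvalues j ≤ hA.eigenvalues i) :
    hA.eigenvalues j ≤ D - h ^ 2 / (2 * D) := by
  have hsymm : A.IsSymm := by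
    rw [Matrix.IsSymm, ← Matrix.conjTranspose_eq_transpose_of_trivial, hA.eq]
  have hne (k : α) : (hA.eigenvectorBasis k).ofLp ≠ 0 :=
    (WithLp.ofLp_eq_zero 2).not.2 (hA.eigenvectorBasis.orthonormal.ne_zero k)
  have horth : (hA.eigenvectorBasis i).ofLp ⬝ᵥ (hA.eigenvectorBasis j).ofLp = 0 := by
    simpa [EuclideanSpace.inner_eq_star_dotProduct] using
      hA.eigenvectorBasis.orthonormal.2 hij.symm
  obtain ⟨w, hw, hsum, hray⟩ := exists_ker_eigenvalue_mul_le_dotProduct_mulVec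
    (hA.mulVec_eigenvectorBasis i) (hA.mulVec_eigenvectorBasis j) (hne i) (hne j) horth hle
    (∑ x, LinearMap.proj x)
  have hw2 : w ⬝ᵥ w = ∑ x, w x ^ 2 := by simp only [dotProduct, sq]
  have hpos : 0 < ∑ x, w x ^ 2 := by
    rw [← hw2]
    simpa using Matrix.dotProduct_star_self_pos_iff.2 hw
  rw [hw2] at hray
  exact le_of_mul_le_mul_right
    (hray.trans (hexp.dotProduct_mulVec_le h0 hD hnonneg hsymm hrow (by simpa using hsum))) hpos

end Expansion

section AdjMat

variable {α : Type*} [Fintype α]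

lemma adjMat_nonneg (G : SimpleGraph α) (x y : α) : 0 ≤ adjMat G x y := by
  unfold adjMat
  split_ifs <;> norm_num

lemma sum_adjMat (G : SimpleGraph α) (x : α) :
    ∑ y, adjMat G x y = (G.neighborSet x).ncard := by
  classical
  simp [adjMat, Set.ncard_eq_toFinset_card', SimpleGraph.neighborSet]

variable [DecidableEq α]

lemma cutWeight_adjMat (G : SimpleGraph α) (U : Finset α) :
    cutWeight (adjMat G) U = cutCount G U := by
  simp only [cutWeight, adjMat, cutCount, Nat.cast_sum, Nat.cast_ite, Nat.cast_one, Nat.cast_zero]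

lemma hasExpansion_adjMat {G : SimpleGraph α} {h : ℝ}
    (hle : ∀ U : Finset α, U.Nonempty → 2 * #U ≤ Fintype.card α → h ≤ cutCount G U / #U) :
    HasExpansion (adjMat G) h := by
  intro U hU
  rw [cutWeight_adjMat]
  rcases U.eq_empty_or_nonempty with rfl | hne
  · simp
  · exact (le_div_iff₀ (by exact_mod_cast hne.card_pos)).1 (hle U hne hU)

end AdjMat

theorem cheeger_inequality {α : Type*} [Fintype α] [DecidableEq α]
    (G : SimpleGraph α) (D : ℕ) (hD : 1 ≤ D) (hN : 2 ≤ Fintype.card α)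
    (hreg : ∀ x : α, (G.neighborSet x).ncard = D)
    (μ : Fin (Fintype.card α) → ℝ) (hmono : Antitone μ)
    (e : Fin (Fintype.card α) ≃ α)
    (heig : ∀ i, μ i = (adjMat_isHermitian G).eigenvalues (e i))
    (h : ℝ)
    (hh : IsLeast {r : ℝ | ∃ U : Finset α, U.Nonempty ∧ 2 * U.card ≤ Fintype.card α ∧
            r = (cutCount G U : ℝ) / U.card} h) :
    μ ⟨1, by omega⟩ ≤ D - h ^ 2 / (2 * D) := by
  obtain ⟨⟨U, -, -, hU⟩, hmin⟩ := hh
  have h01 : (⟨0, by omega⟩ : Fin (Fintype.card α)) < ⟨1, by omega⟩ := Fin.mk_lt_mk.2 one_pos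
  rw [heig]
  exact cheeger_inequality_general (adjMat_isHermitian G) (adjMat_nonneg G) (by exact_mod_cast hD)
    (fun x ↦ by rw [sum_adjMat, hreg]) (hU ▸ by positivity)
    (hasExpansion_adjMat fun V hV hcard ↦ hmin ⟨V, hV, hcard, rfl⟩)
    (e.injective.ne h01.ne) (by simpa only [heig] using hmono h01.le)
end

section
/- Let F be a simple graph on a finite vertex set of size d ≥ 2 with m edges. Then the number of 3-element subsets of the vertex set that contain at least one edge of F and at least one pair of vertices that is not an edge of F equals (1/2)·Σ_y deg(y)·(d − 1 − deg(y)), and this quantity is at least (d/2)·m − m²/(d − 1). -/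
/-!
A mixed triple induces a graph with one or two edges, which in either case has exactly two vertices
of degree one; counting pairs (mixed triple, such a vertex) from the side of the vertex gives the
formula. For the lower bound, the Erdős–Gallai inequality for the neighbourhood of `v` bounds
`deg v ^ 2` plus the sum of the degrees of the neighbours of `v` (Li and Pan), and summing this over
`v` yields de Caen's upper bound on the sum of the squared degrees.
-/

open Finset

section Definitions

variable {α : Type*} (G : SimpleGraph α) [DecidableRel G.Adj]

/-- The vertices of degree one in the subgraph of `G` induced by `s`. -/
def inducedLeaves (s : Finset α) : Finset α := {v ∈ s | #{w ∈ s | G.Adj v w} = 1}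

/-- The triples of vertices spanning both an edge and a non-edge of `G`, as a `Finset` so that they
can be double counted. -/
def mixedTriples [Fintype α] [DecidableEq α] : Finset (Finset α) :=
  {s | #s = 3 ∧ (∃ x ∈ s, ∃ y ∈ s, G.Adj x y) ∧ ∃ x ∈ s, ∃ y ∈ s, x ≠ y ∧ ¬ G.Adj x y}

end Definitions

section MixedTriples

variable {α : Type*} [DecidableEq α]

theorem injOn_insert_pair {A B : Set α} (hAB : Disjoint A B) (v : α) :
    Set.InjOn (fun p : α × α ↦ ({v, p.1, p.2} : Finset α)) (A ×ˢ B) := by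
  rintro ⟨x, z⟩ ⟨hxA, hzB⟩ ⟨x', z'⟩ ⟨hxA', hzB'⟩ (h : ({v, x, z} : Finset α) = {v, x', z'})
  have hx : x ∈ ({v, x', z'} : Finset α) := h ▸ by simp
  have hz : z ∈ ({v, x', z'} : Finset α) := h ▸ by simp
  have hx' : x' ∈ ({v, x, z} : Finset α) := h ▸ by simp
  have hz' : z' ∈ ({v, x, z} : Finset α) := h ▸ by simp
  have hne {a b : α} (ha : a ∈ A) (hb : b ∈ B) : a ≠ b := hAB.ne_of_mem ha hb
  grind

variable {G : SimpleGraph α} [DecidableRel G.Adj]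

theorem exists_eq_insert_pair_of_mem_inducedLeaves {s : Finset α} {v : α} (hs : #s = 3)
    (hv : v ∈ inducedLeaves G s) : ∃ x z, G.Adj v x ∧ Gᶜ.Adj v z ∧ s = {v, x, z} := by
  obtain ⟨hvs, hone⟩ := mem_filter.1 hv
  obtain ⟨x, hx⟩ := card_eq_one.1 hone
  have hneighbor (w : α) : w ∈ s ∧ G.Adj v w ↔ w = x := by
    rw [← mem_filter, hx, mem_singleton]
  obtain ⟨hxs, hvx⟩ := (hneighbor x).2 rfl
  have hxv : x ∈ s.erase v := mem_erase.2 ⟨hvx.ne', hxs⟩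
  have hrest : #((s.erase v).erase x) = 1 := by
    rw [card_erase_of_mem hxv, card_erase_of_mem hvs, hs]
  obtain ⟨z, hz⟩ := card_eq_one.1 hrest
  obtain ⟨hzx, hzv, hzs⟩ : z ≠ x ∧ z ≠ v ∧ z ∈ s := by
    simpa only [mem_erase] using hz.ge (mem_singleton_self z)
  refine ⟨x, z, hvx, ⟨hzv.symm, fun h ↦ hzx ((hneighbor z).1 ⟨hzs, h⟩)⟩, ?_⟩
  rw [← hz, insert_erase hxv, insert_erase hvs]

variable [Fintype α]

theorem card_inducedLeaves_of_mem_mixedTriples {s : Finset α} (hs : s ∈ mixedTriples G) :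
    #(inducedLeaves G s) = 2 := by
  simp only [mixedTriples, mem_filter_univ] at hs
  obtain ⟨hcard, hedge, hnonedge⟩ := hs
  obtain ⟨a, b, c, hab, hac, hbc, rfl⟩ := card_eq_three.1 hcard
  by_cases hGab : G.Adj a b <;> by_cases hGac : G.Adj a c <;> by_cases hGbc : G.Adj b c <;>
    simp_all [inducedLeaves, filter_insert, filter_singleton, G.adj_comm b a, G.adj_comm c a,
      G.adj_comm c b, hab.symm, hac.symm, hbc.symm]

theorem insert_pair_mem_mixedTriples_and_mem_inducedLeaves {v x z : α} (hx : G.Adj v x)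
    (hz : Gᶜ.Adj v z) :
    {v, x, z} ∈ mixedTriples G ∧ v ∈ inducedLeaves G {v, x, z} := by
  rw [SimpleGraph.compl_adj] at hz
  have hxz : x ≠ z := by rintro rfl; exact hz.2 hx
  simp [mixedTriples, inducedLeaves, hx.ne, hz, hxz, hx, filter_insert, filter_singleton]

variable (G)

theorem card_mixedTriples_filter_mem_inducedLeaves (v : α) :
    #{s ∈ mixedTriples G | v ∈ inducedLeaves G s} = G.degree v * Gᶜ.degree v := by
  have himage : ({s ∈ mixedTriples G | v ∈ inducedLeaves G s} : Finset (Finset α)) =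
      (G.neighborFinset v ×ˢ Gᶜ.neighborFinset v).image fun p ↦ {v, p.1, p.2} := by
    ext s
    simp only [mem_filter, mem_image, mem_product, SimpleGraph.mem_neighborFinset, Prod.exists]
    constructor
    · rintro ⟨hs, hv⟩
      obtain ⟨x, z, hx, hz, rfl⟩ :=
        exists_eq_insert_pair_of_mem_inducedLeaves (mem_filter_univ _ |>.1 hs).1 hv
      exact ⟨x, z, ⟨hx, hz⟩, rfl⟩
    · rintro ⟨x, z, ⟨hx, hz⟩, rfl⟩
      exact insert_pair_mem_mixedTriples_and_mem_inducedLeaves hx hz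
  have hdisjoint : Disjoint (G.neighborFinset v : Set α) (Gᶜ.neighborFinset v) := by
    rw [G.coe_neighborFinset, Gᶜ.coe_neighborFinset]
    exact G.compl_neighborSet_disjoint v
  have hinj := injOn_insert_pair hdisjoint v
  rw [← coe_product] at hinj
  rw [himage, card_image_of_injOn hinj, card_product,
    G.card_neighborFinset_eq_degree, Gᶜ.card_neighborFinset_eq_degree]

theorem two_mul_card_mixedTriples :
    2 * #(mixedTriples G) = ∑ v, G.degree v * Gᶜ.degree v := by
  calc 2 * #(mixedTriples G)
      = ∑ s ∈ mixedTriples G, #{v | v ∈ inducedLeaves G s} := by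
        simp_rw [filter_univ_mem]
        rw [sum_const_nat fun s hs ↦ card_inducedLeaves_of_mem_mixedTriples hs, mul_comm]
    _ = ∑ v, #{s ∈ mixedTriples G | v ∈ inducedLeaves G s} :=
        (sum_card_bipartiteAbove_eq_sum_card_bipartiteBelow _).symm
    _ = ∑ v, G.degree v * Gᶜ.degree v :=
        sum_congr rfl fun v _ ↦ card_mixedTriples_filter_mem_inducedLeaves G v

end MixedTriples

section DegreeSums

variable {α : Type*} [Fintype α] (G : SimpleGraph α) [DecidableRel G.Adj]

theorem cast_degree_compl [DecidableEq α] {R : Type*} [AddGroupWithOne R] (v : α) :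
    (Gᶜ.degree v : R) = Fintype.card α - 1 - G.degree v := by
  have hlt := G.degree_lt_card_verts v
  rw [G.degree_compl, Nat.cast_sub (by omega), Nat.cast_sub (by omega), Nat.cast_one]

theorem sum_sum_neighborFinset {M : Type*} [AddCommMonoid M] (f : α → M) :
    ∑ v, ∑ u ∈ G.neighborFinset v, f u = ∑ u, G.degree u • f u := by
  rw [sum_comm' (t' := univ) (s' := fun u ↦ G.neighborFinset u) (by simp [G.adj_comm])]
  simp only [sum_const, G.card_neighborFinset_eq_degree]

-- The easy direction of the Erdős–Gallai theorem.
theorem sum_degree_le_add_sum_compl_degree [DecidableEq α] (S : Finset α) :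
    ∑ v ∈ S, G.degree v ≤ #S * (#S - 1) + ∑ v ∈ Sᶜ, G.degree v := by
  have hsplit (v : α) : G.degree v = #{w ∈ S | G.Adj v w} + #{w ∈ Sᶜ | G.Adj v w} := by
    rw [← card_union_of_disjoint (disjoint_filter_filter disjoint_compl_right), ← filter_union,
      union_compl, ← G.card_neighborFinset_eq_degree, G.neighborFinset_eq_filter]
  have hinside : ∀ v ∈ S, #{w ∈ S | G.Adj v w} ≤ #S - 1 := fun v hv ↦ by
    rw [← card_erase_of_mem hv]
    refine card_le_card fun w hw ↦ ?_
    rw [mem_filter] at hw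
    exact mem_erase.2 ⟨hw.2.ne', hw.1⟩
  have houtside (w : α) : #{v ∈ S | G.Adj v w} ≤ G.degree w := by
    rw [hsplit w]
    simp_rw [G.adj_comm w]
    exact Nat.le_add_right _ _
  calc ∑ v ∈ S, G.degree v
      = ∑ v ∈ S, #{w ∈ S | G.Adj v w} + ∑ v ∈ S, #{w ∈ Sᶜ | G.Adj v w} := by
        simp_rw [← sum_add_distrib, ← hsplit]
    _ = ∑ v ∈ S, #{w ∈ S | G.Adj v w} + ∑ w ∈ Sᶜ, #{v ∈ S | G.Adj v w} :=
        congrArg _ (sum_card_bipartiteAbove_eq_sum_card_bipartiteBelow G.Adj)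
    _ ≤ #S * (#S - 1) + ∑ w ∈ Sᶜ, G.degree w :=
        add_le_add (sum_le_card_nsmul _ _ _ hinside) (sum_le_sum fun w _ ↦ houtside w)

theorem two_mul_sum_degree_le (S : Finset α) :
    2 * ∑ v ∈ S, G.degree v ≤ #S * (#S - 1) + 2 * #G.edgeFinset := by
  classical
  have hle := sum_degree_le_add_sum_compl_degree G S
  have hsum := sum_add_sum_compl S (G.degree ·)
  rw [G.sum_degrees_eq_twice_card_edges] at hsum
  omega

theorem degree_add_sum_neighborFinset_degree_le (v : α) :
    G.degree v + ∑ u ∈ G.neighborFinset v, G.degree u ≤ 2 * #G.edgeFinset := by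
  classical
  rw [← G.sum_degrees_eq_twice_card_edges,
    ← sum_insert (f := (G.degree ·)) (G.notMem_neighborFinset_self v)]
  exact sum_le_univ_sum_of_nonneg fun _ ↦ Nat.zero_le _

theorem sum_neighborFinset_degree_le (v : α) :
    ∑ u ∈ G.neighborFinset v, G.degree u ≤ G.degree v * (Fintype.card α - 1) := by
  rw [← G.card_neighborFinset_eq_degree v]
  exact sum_le_card_nsmul _ _ _ fun u _ ↦ Nat.le_sub_one_of_lt (G.degree_lt_card_verts u)

theorem card_sub_one_mul_sq_degree_add_sum_neighborFinset_degree_le (v : α) :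
    ((Fintype.card α : ℤ) - 1) *
        ((G.degree v : ℤ) ^ 2 + ∑ u ∈ G.neighborFinset v, (G.degree u : ℤ)) ≤
      G.degree v * (2 * #G.edgeFinset + (Fintype.card α - 1) * (Fintype.card α - 2)) := by
  obtain ⟨q, hq⟩ := Nat.exists_eq_add_of_lt (G.degree_lt_card_verts v)
  have hall := degree_add_sum_neighborFinset_degree_le G v
  have hmax := sum_neighborFinset_degree_le G v
  have hEG := two_mul_sum_degree_le G (G.neighborFinset v)
  rw [G.card_neighborFinset_eq_degree] at hEG
  rw [hq, Nat.add_sub_cancel] at hmax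
  rw [hq, ← Nat.cast_sum]
  generalize G.degree v = k, ∑ u ∈ G.neighborFinset v, G.degree u = A, #G.edgeFinset = m at *
  have hpred : ((k * (k - 1) : ℕ) : ℤ) = k * (k - 1) := by cases k <;> simp
  zify [hpred] at hall hmax hEG
  push_cast
  -- In each case the claim is a combination of the Erdős–Gallai bound and one trivial bound.
  rcases le_total (q : ℤ) k with hqk | hkq
  · have hsq : (k : ℤ) * q ≤ k * q ^ 2 := by gcongr; exact Int.le_self_sq q
    have hEG' := mul_le_mul_of_nonneg_left hEG q.cast_nonneg
    linear_combination hEG' + (k - q : ℤ) * hall + hsq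
  · have hsq : (q : ℤ) * k ≤ q * k ^ 2 := by gcongr; exact Int.le_self_sq k
    have hEG' := mul_le_mul_of_nonneg_left hEG k.cast_nonneg
    linear_combination hEG' + (q - k : ℤ) * hmax + hsq

-- De Caen's inequality, cleared of denominators.
theorem card_sub_one_mul_sum_sq_degree_le :
    ((Fintype.card α : ℤ) - 1) * ∑ v, (G.degree v : ℤ) ^ 2 ≤
      #G.edgeFinset * (2 * #G.edgeFinset + (Fintype.card α - 1) * (Fintype.card α - 2)) := by
  have hlocal := sum_le_sum fun v (_ : v ∈ univ) ↦
    card_sub_one_mul_sq_degree_add_sum_neighborFinset_degree_le G v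
  have hneighbor : ∑ v, ∑ u ∈ G.neighborFinset v, (G.degree u : ℤ) = ∑ v, (G.degree v : ℤ) ^ 2 := by
    simp only [sum_sum_neighborFinset, nsmul_eq_mul, sq]
  have hsum : ∑ v, (G.degree v : ℤ) = 2 * #G.edgeFinset :=
    mod_cast G.sum_degrees_eq_twice_card_edges
  rw [← mul_sum, ← sum_mul, sum_add_distrib, hneighbor, hsum] at hlocal
  linarith

theorem card_edgeFinset_mul_le_sum_degree_mul_degree_compl [DecidableEq α] :
    (#G.edgeFinset : ℤ) * (Fintype.card α * (Fintype.card α - 1) - 2 * #G.edgeFinset) ≤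
      (Fintype.card α - 1) * ∑ v, (G.degree v : ℤ) * Gᶜ.degree v := by
  have hdeCaen := card_sub_one_mul_sum_sq_degree_le G
  have hsum : ∑ v, (G.degree v : ℤ) = 2 * #G.edgeFinset :=
    mod_cast G.sum_degrees_eq_twice_card_edges
  have hexpand : ∑ v, (G.degree v : ℤ) * Gᶜ.degree v =
      2 * #G.edgeFinset * (Fintype.card α - 1) - ∑ v, (G.degree v : ℤ) ^ 2 := by
    simp only [cast_degree_compl, mul_sub _ _ (G.degree _ : ℤ), ← sq, sum_sub_distrib, ← sum_mul,
      hsum]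
  rw [hexpand]
  linear_combination hdeCaen

end DegreeSums

theorem mixed_triples_count {α : Type*} [Fintype α] (G : SimpleGraph α)
    (hd : 2 ≤ Fintype.card α) :
    (({s : Finset α | s.card = 3 ∧ (∃ x ∈ s, ∃ y ∈ s, G.Adj x y) ∧
          (∃ x ∈ s, ∃ y ∈ s, x ≠ y ∧ ¬ G.Adj x y)}.ncard : ℝ) =
        1 / 2 * ∑ y : α, ((G.neighborSet y).ncard : ℝ) *
          ((Fintype.card α : ℝ) - 1 - (G.neighborSet y).ncard)) ∧
      ((Fintype.card α : ℝ) / 2) * G.edgeSet.ncard -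
          (G.edgeSet.ncard : ℝ) ^ 2 / ((Fintype.card α : ℝ) - 1) ≤
        ({s : Finset α | s.card = 3 ∧ (∃ x ∈ s, ∃ y ∈ s, G.Adj x y) ∧
          (∃ x ∈ s, ∃ y ∈ s, x ≠ y ∧ ¬ G.Adj x y)}.ncard : ℝ) := by
  classical
  have hmixed : {s : Finset α | s.card = 3 ∧ (∃ x ∈ s, ∃ y ∈ s, G.Adj x y) ∧
      (∃ x ∈ s, ∃ y ∈ s, x ≠ y ∧ ¬ G.Adj x y)} = mixedTriples G := by
    simp only [mixedTriples, coe_filter_univ]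
  have hdegree (v : α) : (G.neighborSet v).ncard = G.degree v := by
    simp only [← G.coe_neighborFinset, Set.ncard_coe_finset, G.card_neighborFinset_eq_degree]
  have hcount : 2 * (#(mixedTriples G) : ℝ) = ∑ v, (G.degree v : ℝ) * Gᶜ.degree v :=
    mod_cast two_mul_card_mixedTriples G
  rw [hmixed, ← G.coe_edgeFinset]
  simp only [Set.ncard_coe_finset, hdegree, ← cast_degree_compl]
  refine ⟨by linarith, ?_⟩
  have hbound : (#G.edgeFinset : ℝ) * (Fintype.card α * (Fintype.card α - 1) - 2 * #G.edgeFinset) ≤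
      (Fintype.card α - 1) * ∑ v, (G.degree v : ℝ) * Gᶜ.degree v :=
    mod_cast card_edgeFinset_mul_le_sum_degree_mul_degree_compl G
  have hpos : 0 < (Fintype.card α : ℝ) - 1 := sub_pos.2 (mod_cast hd)
  rw [← hcount] at hbound
  rw [sub_le_iff_le_add, ← sub_le_iff_le_add', le_div_iff₀ hpos]
  linear_combination hbound / 2
end
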